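/- Let V be a U-module, v ∈ V, and λ ∈ ℂ with Z·v = λ·v. Then Z·(X·v) = (2 − λ)·(X·v) and Z·(Y·v) = (−2 − λ)·(Y·v). If moreover X²·v = a·v for some scalar a ∈ ℂ, then X²·(Y·v) = (a − 2λ − 2)·(Y·v). -/

import Mathlib

/-!
If `f g + g f = c f`, then `f` carries the `μ`-eigenspace of `g` to the `(c - μ)`-eigenspace; this
is the shift by `X` and by `Y`. Moreover `X² - Z = Y²` commutes with `Y`, so `Y` preserves its
eigenspaces. On a joint eigenvector, `X² = Y² + Z` therefore changes its eigenvalue under `Y` by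
exactly as much as `Z` does.
-/

section Eigenspace

open Module.End

variable {R V : Type*} [CommRing R] [AddCommGroup V] [Module R V]

theorem eigenspace_inf_eigenspace_le_eigenspace_add (f g : Module.End R V) (μ ν : R) :
    eigenspace f μ ⊓ eigenspace g ν ≤ eigenspace (f + g) (μ + ν) := by
  rintro v ⟨hf, hg⟩
  rw [SetLike.mem_coe, mem_eigenspace_iff] at hf hg
  rw [mem_eigenspace_iff, LinearMap.add_apply, hf, hg, add_smul]

theorem eigenspace_inf_eigenspace_le_eigenspace_sub (f g : Module.End R V) (μ ν : R) :
    eigenspace f μ ⊓ eigenspace g ν ≤ eigenspace (f - g) (μ - ν) := by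
  rintro v ⟨hf, hg⟩
  rw [SetLike.mem_coe, mem_eigenspace_iff] at hf hg
  rw [mem_eigenspace_iff, LinearMap.sub_apply, hf, hg, sub_smul]

theorem mapsTo_eigenspace_of_mul_add_mul_eq_smul {f g : Module.End R V} {c : R}
    (h : f * g + g * f = c • f) (μ : R) :
    Set.MapsTo f (eigenspace g μ) (eigenspace g (c - μ)) := by
  intro v hv
  rw [SetLike.mem_coe, mem_eigenspace_iff] at hv ⊢
  calc g (f v) = (f * g + g * f) v - f (g v) := by simp
    _ = c • f v - μ • f v := by rw [h, hv, map_smul, LinearMap.smul_apply]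
    _ = (c - μ) • f v := (sub_smul c μ (f v)).symm

theorem mapsTo_eigenspace_inf_eigenspace_of_commute_sub {f g q : Module.End R V} {c : R}
    (h : f * g + g * f = c • f) (hq : Commute (q - g) f) (μ a : R) :
    Set.MapsTo f ↑(eigenspace g μ ⊓ eigenspace q a) (eigenspace q (a - 2 * μ + c)) := by
  rintro v ⟨hg, hqv⟩
  have hfg : f v ∈ eigenspace g (c - μ) := mapsTo_eigenspace_of_mul_add_mul_eq_smul h μ hg
  have hfsub : f v ∈ eigenspace (q - g) (a - μ) :=
    mapsTo_genEigenspace_of_comm hq (a - μ) 1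
      (eigenspace_inf_eigenspace_le_eigenspace_sub q g a μ ⟨hqv, hg⟩)
  have hfq := eigenspace_inf_eigenspace_le_eigenspace_add (q - g) g _ _ ⟨hfsub, hfg⟩
  rwa [sub_add_cancel, show a - μ + (c - μ) = a - 2 * μ + c by ring] at hfq

theorem UF_eigenvector_shift_general {X Y Z : Module.End R V} {c d : R}
    (hXZ : X * Z + Z * X = c • X) (hYZ : Y * Z + Z * Y = d • Y) (hXYZ : X * X - Y * Y = Z)
    {v : V} {μ : R} (hv : Z v = μ • v) :
    Z (X v) = (c - μ) • X v ∧
    Z (Y v) = (d - μ) • Y v ∧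
    ∀ a : R, (X * X) v = a • v → (X * X) (Y v) = (a - 2 * μ + d) • Y v := by
  have hcomm : Commute (X * X - Z) Y := by
    rw [← hXYZ, sub_sub_cancel]
    exact (Commute.refl Y).mul_left (Commute.refl Y)
  simp only [← mem_eigenspace_iff] at hv ⊢
  exact ⟨mapsTo_eigenspace_of_mul_add_mul_eq_smul hXZ μ hv,
    mapsTo_eigenspace_of_mul_add_mul_eq_smul hYZ μ hv,
    fun a ha ↦ mapsTo_eigenspace_inf_eigenspace_of_commute_sub hYZ hcomm μ a ⟨hv, ha⟩⟩

end Eigenspace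

/-- in any module over the twisted enveloping algebra
`U = ℂ⟨X,Y,Z⟩/(XZ+ZX−2X, YZ+ZY+2Y, X²−Y²−Z)`, the operators `X` and `Y` shift
`Z`-eigenvectors, and `Y` shifts simultaneous `(Z, X²)`-eigenvectors. -/
theorem UF_eigenvector_shift
    {V : Type*} [AddCommGroup V] [Module ℂ V]
    (X Y Z : Module.End ℂ V)
    (hXZ : X * Z + Z * X = (2 : ℂ) • X)
    (hYZ : Y * Z + Z * Y = (-2 : ℂ) • Y)
    (hXYZ : X * X - Y * Y = Z)
    (v : V) (lam : ℂ) (hv : Z v = lam • v) :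
    Z (X v) = (2 - lam) • (X v) ∧
    Z (Y v) = (-2 - lam) • (Y v) ∧
    ∀ a : ℂ, (X * X) v = a • v → (X * X) (Y v) = (a - 2 * lam - 2) • (Y v) := by
  simpa only [← sub_eq_add_neg] using UF_eigenvector_shift_general hXZ hYZ hXYZ hv
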